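/- arXiv:2101.01680 — 2 statements merged into one kernel-verified Lean document; each statement's English description precedes it below -/
import Mathlib

section
/- For every α ∈ (0,2), the function ρ_α is strictly increasing on the interval [t₀(α), min(π, πα)): if t₀(α) ≤ θ₁ < θ₂ < min(π, πα) then ρ_α(θ₁) < ρ_α(θ₂). -/
open MeasureTheory Set

/-- `t₀(α) = 2πα/(α+2)`. -/
noncomputable def t0 (α : ℝ) : ℝ := 2 * Real.pi * α / (α + 2)

/-- `Z₀(θ) = (sin t₀(α) / sin θ)^(1/α)`. -/
noncomputable def Z0 (α θ : ℝ) : ℝ := (Real.sin (t0 α) / Real.sin θ) ^ (1 / α)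

/-!
Write `τ = t₀(α)` and `κ = sin (θ - τ) / sin θ`. As `t` runs over `[0, Z₀(θ)]` the point
`e^{iτ} - e^{iθ} t ^ α` traces the segment from `e^{iτ}` to `κ ≥ 0` in the upper half plane, so
`g_θ` is `-i` times the principal square root of this point. Put `J = ∫ √(e^{iτ} - e^{iθ} t ^ α) dt`
over `[0, Z₀(θ)]` and `C = ∫₀¹ √(1 - ξ ^ α) dξ`, so that `ρ(θ) = Im J - 2 sin (θ / α) C`.

Rescaling to `[0, 1]`, differentiating under the integral and integrating by parts gives
`α ρ'(θ) = Z₀ √κ - Re J - 2 cos (θ / α) C`. Pointwise on the segment, at its point with parameter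
`u`, `Re √ ≤ √κ + √(1 - u) cos (τ / 2) max (1 - κ) 0`, and `Z₀ (1 - κ)` decreases from its value `1`
at `θ = τ`; hence `Re J - Z₀ √κ ≤ cos (τ / 2) C`. Since `τ / α = π - τ / 2`, also
`cos (θ / α) ≤ -cos (τ / 2)` on the interval, and so `α ρ'(θ) ≥ cos (τ / 2) C > 0`.
-/

open scoped Topology

/-! ### Integrals along segments -/

theorem hasDerivAt_intervalIntegral_of_continuousAt {𝕜 E : Type*} [RCLike 𝕜]
    [NormedAddCommGroup E] [NormedSpace ℝ E] [NormedSpace 𝕜 E] {F F' : 𝕜 → ℝ → E} {x₀ : 𝕜}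
    {a b : ℝ} (hF : ∀ t ∈ uIcc a b, ∀ᶠ p : 𝕜 × ℝ in 𝓝 (x₀, t), ContinuousAt (F p.1) p.2)
    (hF' : ∀ t ∈ uIcc a b, ContinuousAt (Function.uncurry F') (x₀, t))
    (hderiv : ∀ t ∈ uIcc a b, ∀ᶠ p : 𝕜 × ℝ in 𝓝 (x₀, t),
      HasDerivAt (fun x => F x p.2) (F' p.1 p.2) p.1) :
    HasDerivAt (fun x => ∫ t in a..b, F x t) (∫ t in a..b, F' x₀ t) x₀ := by
  have hF'cont : ContinuousOn (F' x₀) (uIcc a b) := fun t ht =>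
    ((hF' t ht).comp (f := fun t => (x₀, t)) (by fun_prop)).continuousWithinAt
  obtain ⟨M, hM⟩ := isCompact_uIcc.exists_bound_of_continuousOn hF'cont
  have hFcont : ∀ᶠ x in 𝓝 x₀, ContinuousOn (F x) (uIcc a b) :=
    (isCompact_uIcc.eventually_forall_of_forall_eventually
      (P := fun x t => ContinuousAt (F x) t) hF).mono
      fun _ hx t ht => (hx t ht).continuousWithinAt
  have hbound : ∀ᶠ x in 𝓝 x₀, ∀ t ∈ uIcc a b, ‖F' x t‖ ≤ M + 1 :=
    isCompact_uIcc.eventually_forall_of_forall_eventually fun t ht =>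
      ((hF' t ht).norm.eventually_lt_const (lt_add_of_le_of_pos (hM t ht) one_pos)).mono
        fun _ => le_of_lt
  have hdiff := isCompact_uIcc.eventually_forall_of_forall_eventually
    (P := fun x t => HasDerivAt (fun x => F x t) (F' x t) x) hderiv
  exact (intervalIntegral.hasDerivAt_integral_of_dominated_loc_of_deriv_le
    (hbound.and hdiff)
    (hFcont.mono fun x hx => hx.intervalIntegrable.def'.aestronglyMeasurable)
    hFcont.self_of_nhds.intervalIntegrable hF'cont.intervalIntegrable.def'.aestronglyMeasurable
    (ae_of_all _ fun t ht x hx => hx.1 t (uIoc_subset_uIcc ht)) intervalIntegrable_const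
    (ae_of_all _ fun t ht x hx => hx.2 t (uIoc_subset_uIcc ht))).2

/-- The integral of `f` along the segment from `a` to `b` with respect to the parametrization
`v ↦ (1 - v ^ α) a + v ^ α b` of the segment by `[0, 1]` and the measure `dv`. -/
noncomputable def rpowSegmentIntegral {E : Type*} [NormedAddCommGroup E] [NormedSpace ℝ E]
    (f : ℂ → E) (α : ℝ) (a b : ℂ) : E :=
  ∫ v in (0 : ℝ)..1, f (AffineMap.lineMap a b (v ^ α))

section

variable {E : Type*} [NormedAddCommGroup E] [NormedSpace ℂ E] {f : ℂ → E} {U : Set ℂ}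
  {α : ℝ} {a b : ℂ}

theorem rpow_mem_Icc_zero_one {v : ℝ} (hα : 0 ≤ α) (hv : v ∈ Icc (0 : ℝ) 1) :
    v ^ α ∈ Icc (0 : ℝ) 1 :=
  ⟨Real.rpow_nonneg hv.1 α, Real.rpow_le_one hv.1 hv.2 hα⟩

theorem continuous_lineMap_rpow (hα : 0 < α) :
    Continuous fun p : ℂ × ℝ => (AffineMap.lineMap a p.1 (p.2 ^ α) : ℂ) := by
  have hpow : Continuous fun p : ℂ × ℝ => p.2 ^ α := continuous_snd.rpow_const fun _ => .inr hα.le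
  simp only [AffineMap.lineMap_apply_module]
  fun_prop

theorem hasDerivAt_comp_lineMap_rpow {v : ℝ} {f' : E} (hv : 0 < v)
    (hf : HasDerivAt f f' (AffineMap.lineMap a b (v ^ α))) :
    HasDerivAt (fun v : ℝ => f (AffineMap.lineMap a b (v ^ α)))
      (((α * v ^ (α - 1) : ℝ) * (b - a) : ℂ) • f') v := by
  have hline : HasDerivAt (fun v : ℝ => (AffineMap.lineMap a b (v ^ α) : ℂ))
      ((α * v ^ (α - 1) : ℝ) * (b - a)) v := by
    rw [← Complex.real_smul]
    exact (AffineMap.hasDerivAt_lineMap (a := a) (b := b)).scomp (h := fun v : ℝ => v ^ α) v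
      (Real.hasDerivAt_rpow_const (.inl hv.ne'))
  exact hf.scomp v hline

variable [CompleteSpace E]

theorem continuousAt_deriv_lineMap_rpow (hα : 0 < α) (hU : IsOpen U) (hf : DifferentiableOn ℂ f U)
    {p : ℂ × ℝ} (hp : AffineMap.lineMap a p.1 (p.2 ^ α) ∈ U) :
    ContinuousAt (fun p : ℂ × ℝ =>
      ((p.2 ^ α : ℝ) : ℂ) • deriv f (AffineMap.lineMap a p.1 (p.2 ^ α))) p := by
  have hpow : Continuous fun p : ℂ × ℝ => ((p.2 ^ α : ℝ) : ℂ) :=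
    Complex.continuous_ofReal.comp (continuous_snd.rpow_const fun _ => .inr hα.le)
  exact hpow.continuousAt.smul (((hf.deriv hU).continuousOn.continuousAt (hU.mem_nhds hp)).comp
    (f := fun p : ℂ × ℝ => (AffineMap.lineMap a p.1 (p.2 ^ α) : ℂ))
    (continuous_lineMap_rpow hα).continuousAt)

theorem hasDerivAt_rpowSegmentIntegral_integral_deriv (hα : 0 < α) (hU : IsOpen U)
    (hf : DifferentiableOn ℂ f U) (hab : segment ℝ a b ⊆ U) :
    HasDerivAt (rpowSegmentIntegral f α a)
      (∫ v in (0 : ℝ)..1, ((v ^ α : ℝ) : ℂ) • deriv f (AffineMap.lineMap a b (v ^ α))) b := by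
  have hmem (v : ℝ) (hv : v ∈ uIcc (0 : ℝ) 1) : AffineMap.lineMap a b (v ^ α) ∈ U := by
    rw [uIcc_of_le zero_le_one] at hv
    exact hab (lineMap_mem_segment ℝ a b (rpow_mem_Icc_zero_one hα.le hv))
  have hnear (v : ℝ) (hv : v ∈ uIcc (0 : ℝ) 1) :
      ∀ᶠ p : ℂ × ℝ in 𝓝 (b, v), AffineMap.lineMap a p.1 (p.2 ^ α) ∈ U :=
    (continuous_lineMap_rpow hα).continuousAt.eventually_mem (hU.mem_nhds (hmem v hv))
  have hfderiv {z : ℂ} (hz : z ∈ U) : HasDerivAt f (deriv f z) z :=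
    (hf.differentiableAt (hU.mem_nhds hz)).hasDerivAt
  refine hasDerivAt_intervalIntegral_of_continuousAt
    (F := fun b v => f (AffineMap.lineMap a b (v ^ α)))
    (F' := fun b v => ((v ^ α : ℝ) : ℂ) • deriv f (AffineMap.lineMap a b (v ^ α)))
    (fun v hv => (hnear v hv).mono fun p hp => ?_)
    (fun v hv => continuousAt_deriv_lineMap_rpow hα hU hf (hmem v hv))
    (fun v hv => (hnear v hv).mono fun p hp => ?_)
  · exact (hfderiv hp).continuousAt.comp (f := fun v : ℝ => (AffineMap.lineMap a p.1 (v ^ α) : ℂ))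
      ((continuous_lineMap_rpow hα).comp (Continuous.prodMk_right p.1)).continuousAt
  · have hline : HasDerivAt (fun b : ℂ => (AffineMap.lineMap a b (p.2 ^ α) : ℂ))
        ((p.2 ^ α : ℝ) : ℂ) p.1 := by
      simpa [AffineMap.lineMap_apply_module] using
        ((hasDerivAt_id p.1).const_mul ((p.2 ^ α : ℝ) : ℂ)).const_add ((1 - (p.2 ^ α : ℝ)) * a)
    exact (hfderiv hp).scomp p.1 hline

theorem rpowSegmentIntegral_add_integral_deriv (hα : 0 < α) (hU : IsOpen U)
    (hf : DifferentiableOn ℂ f U) (hab : segment ℝ a b ⊆ U) :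
    rpowSegmentIntegral f α a b + (α * (b - a)) •
      ∫ v in (0 : ℝ)..1, ((v ^ α : ℝ) : ℂ) • deriv f (AffineMap.lineMap a b (v ^ α)) = f b := by
  have hmem {v : ℝ} (hv : v ∈ Icc (0 : ℝ) 1) : AffineMap.lineMap a b (v ^ α) ∈ U :=
    hab (lineMap_mem_segment ℝ a b (rpow_mem_Icc_zero_one hα.le hv))
  have hcont : ContinuousOn (fun v : ℝ => f (AffineMap.lineMap a b (v ^ α))) (Icc 0 1) :=
    hf.continuousOn.comp
      ((continuous_lineMap_rpow hα).comp (Continuous.prodMk_right b)).continuousOn fun _ => hmem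
  have hcont' : ContinuousOn (fun v : ℝ =>
      ((v ^ α : ℝ) : ℂ) • deriv f (AffineMap.lineMap a b (v ^ α))) (Icc 0 1) := fun v hv =>
    ((continuousAt_deriv_lineMap_rpow hα hU hf (p := (b, v)) (hmem hv)).comp
      (f := fun v : ℝ => (b, v)) (by fun_prop)).continuousWithinAt
  have hint := hcont.intervalIntegrable_of_Icc (μ := volume) zero_le_one
  have hint' : IntervalIntegrable (fun v : ℝ => (α * (b - a)) •
      ((v ^ α : ℝ) : ℂ) • deriv f (AffineMap.lineMap a b (v ^ α))) volume 0 1 :=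
    (hcont'.intervalIntegrable_of_Icc zero_le_one).smul _
  have hderiv (v : ℝ) (hv : v ∈ Ioo (0 : ℝ) 1) :
      HasDerivAt (fun v : ℝ => v • f (AffineMap.lineMap a b (v ^ α)))
        (f (AffineMap.lineMap a b (v ^ α)) + (α * (b - a)) •
          ((v ^ α : ℝ) : ℂ) • deriv f (AffineMap.lineMap a b (v ^ α))) v := by
    have hv' := Ioo_subset_Icc_self hv
    refine ((hasDerivAt_id v).smul (hasDerivAt_comp_lineMap_rpow hv.1
      (hf.differentiableAt (hU.mem_nhds (hmem hv'))).hasDerivAt)).congr_deriv ?_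
    have hpow : ((v ^ α : ℝ) : ℂ) = (v ^ (α - 1) : ℝ) * v := by
      rw [← Complex.ofReal_mul, ← Real.rpow_add_one hv.1.ne', sub_add_cancel]
    rw [hpow, id, one_smul, ← Complex.coe_smul, smul_smul, smul_smul, add_comm]
    push_cast
    ring_nf
  have hftc := intervalIntegral.integral_eq_sub_of_hasDerivAt_of_le zero_le_one
    (continuousOn_id.smul hcont) hderiv (hint.add hint')
  rw [intervalIntegral.integral_add hint hint', intervalIntegral.integral_smul] at hftc
  simpa [rpowSegmentIntegral] using hftc

theorem hasDerivAt_rpowSegmentIntegral (hα : 0 < α) (hU : IsOpen U) (hf : DifferentiableOn ℂ f U)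
    (hab : segment ℝ a b ⊆ U) (hne : a ≠ b) :
    HasDerivAt (rpowSegmentIntegral f α a)
      ((α * (b - a))⁻¹ • (f b - rpowSegmentIntegral f α a b)) b := by
  refine (hasDerivAt_rpowSegmentIntegral_integral_deriv hα hU hf hab).congr_deriv ?_
  have hscalar : (α * (b - a) : ℂ) ≠ 0 :=
    mul_ne_zero (Complex.ofReal_ne_zero.2 hα.ne') (sub_ne_zero.2 hne.symm)
  rw [eq_inv_smul_iff₀ hscalar, ← rpowSegmentIntegral_add_integral_deriv hα hU hf hab,
    add_sub_cancel_left]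

end

/-! ### Principal square roots along a segment from the unit circle to the real axis -/

theorem complexSqrt_sq (z : ℂ) : z.sqrt ^ 2 = z := by simp [Complex.sqrt]

theorem complexSqrt_exp_I_mul_ofReal {τ : ℝ} (hτ : τ ∈ Ioc (-Real.pi) Real.pi) :
    (Complex.exp (Complex.I * τ)).sqrt = Complex.exp (Complex.I * (τ / 2 : ℝ)) := by
  rw [sqrt_eq_exp (Complex.exp_ne_zero _), Complex.log_exp (by simpa using hτ.1)
    (by simpa using hτ.2)]
  push_cast
  ring_nf

theorem re_complexSqrt_le {z : ℂ} {p : ℝ} (hp : 0 ≤ p) (hre : z.re ≤ p ^ 2)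
    (him : z.im ^ 2 ≤ 4 * p ^ 2 * (p ^ 2 - z.re)) : z.sqrt.re ≤ p := by
  have hnorm : ‖z‖ ≤ 2 * p ^ 2 - z.re := by
    refine abs_le_of_sq_le_sq' ?_ (by nlinarith) |>.2
    rw [Complex.sq_norm, Complex.normSq_apply]
    linarith
  rw [Complex.sqrt, Complex.cpow_inv_two_re]
  exact Real.sqrt_le_iff.2 ⟨hp, by linarith⟩

theorem re_complexSqrt_le_sqrt_norm (z : ℂ) : z.sqrt.re ≤ √‖z‖ := by
  rw [Complex.sqrt, Complex.cpow_inv_two_re]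
  exact Real.sqrt_le_sqrt (by linarith [Complex.re_le_norm z])

-- With `c = cos x`, `d = √(1 - u)` and `r = √κ`, let `z` be the point of the segment from
-- `e^{2ix}` to `κ` with parameter `u`, and `p` the bound on `Re √z` to be proved: the right-hand
-- side is `p ^ 2 - Re z`, and the left-hand side is `(Im z) ^ 2 / (2 d c) ^ 2`.
theorem mul_sq_le_sq_sub {c d r : ℝ} (hc : c ∈ Icc (0 : ℝ) 1) (hd : d ∈ Icc (0 : ℝ) 1)
    (hr : r ∈ Icc (0 : ℝ) 1) :
    d ^ 2 * (1 - c ^ 2) ≤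
      (r + d * c * (1 - r ^ 2)) ^ 2 - (d ^ 2 * (2 * c ^ 2 - 1) + (1 - d ^ 2) * r ^ 2) := by
  obtain ⟨hc0, hc1⟩ := hc
  obtain ⟨hd0, hd1⟩ := hd
  obtain ⟨hr0, hr1⟩ := hr
  have hr2 : 0 ≤ 1 - r ^ 2 := sub_nonneg.2 (pow_le_one₀ hr0 hr1)
  have hc2 : 0 ≤ 1 - c ^ 2 := sub_nonneg.2 (pow_le_one₀ hc0 hc1)
  have hdrc : d * r * c ≤ 1 := mul_le_one₀ (mul_le_one₀ hd1 hr0 hr1) hc0 hc1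
  have hgap : 0 ≤ r * d * (c * (1 - r ^ 2) * (2 - d * r * c) + d * r * (1 - c ^ 2)) := by
    have : 0 ≤ 2 - d * r * c := by linarith
    positivity
  linear_combination hgap

theorem lineMap_exp_re (τ κ u : ℝ) :
    (AffineMap.lineMap (Complex.exp (Complex.I * τ)) (κ : ℂ) u : ℂ).re =
      (1 - u) * Real.cos τ + u * κ := by
  rw [mul_comm, AffineMap.lineMap_apply_module]
  simp [Complex.exp_ofReal_mul_I_re]

theorem lineMap_exp_im (τ κ u : ℝ) :
    (AffineMap.lineMap (Complex.exp (Complex.I * τ)) (κ : ℂ) u : ℂ).im =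
      (1 - u) * Real.sin τ := by
  rw [mul_comm, AffineMap.lineMap_apply_module]
  simp [Complex.exp_ofReal_mul_I_im]

theorem segment_exp_subset_slitPlane {τ κ : ℝ} (hτ : 0 < Real.sin τ) (hκ : 0 < κ) :
    segment ℝ (Complex.exp (Complex.I * τ)) (κ : ℂ) ⊆ Complex.slitPlane := by
  rw [segment_eq_image_lineMap]
  rintro _ ⟨u, -, rfl⟩
  rw [Complex.mem_slitPlane_iff, lineMap_exp_re, lineMap_exp_im]
  rcases eq_or_ne u 1 with rfl | hu
  · exact .inl (by simpa)
  · exact .inr (mul_ne_zero (sub_ne_zero.2 hu.symm) hτ.ne')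

theorem continuousAt_complexSqrt_lineMap_exp {τ κ u : ℝ} (hτ : 0 < Real.sin τ) (hκ : 0 ≤ κ) :
    ContinuousAt Complex.sqrt (AffineMap.lineMap (Complex.exp (Complex.I * τ)) (κ : ℂ) u) := by
  refine Complex.continuousAt_sqrt ?_
  rw [lineMap_exp_re, lineMap_exp_im]
  rcases eq_or_ne u 1 with rfl | hu
  · exact .inl (by simpa)
  · exact .inr (mul_ne_zero (sub_ne_zero.2 hu.symm) hτ.ne')

theorem re_complexSqrt_lineMap_le_of_le_one {x κ u : ℝ} (hx : 0 ≤ Real.cos x)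
    (hκ : κ ∈ Icc (0 : ℝ) 1) (hu : u ∈ Icc (0 : ℝ) 1) :
    (AffineMap.lineMap (Complex.exp (Complex.I * (2 * x : ℝ))) (κ : ℂ) u : ℂ).sqrt.re ≤
      √κ + √(1 - u) * Real.cos x * (1 - κ) := by
  have hd : √(1 - u) ∈ Icc (0 : ℝ) 1 :=
    ⟨Real.sqrt_nonneg _, Real.sqrt_le_one.2 (by linarith [hu.1])⟩
  have hr : √κ ∈ Icc (0 : ℝ) 1 := ⟨Real.sqrt_nonneg _, Real.sqrt_le_one.2 hκ.2⟩
  have hd2 : √(1 - u) ^ 2 = 1 - u := Real.sq_sqrt (sub_nonneg.2 hu.2)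
  have hr2 : √κ ^ 2 = κ := Real.sq_sqrt hκ.1
  have hgap := mul_sq_le_sq_sub ⟨hx, Real.cos_le_one x⟩ hd hr
  rw [hr2, hd2, sub_sub_cancel, ← Real.cos_two_mul, ← lineMap_exp_re, ← Real.sin_sq] at hgap
  have hu1 : 0 ≤ 1 - u := sub_nonneg.2 hu.2
  set z : ℂ := AffineMap.lineMap (Complex.exp (Complex.I * (2 * x : ℝ))) (κ : ℂ) u with hz
  set p := √κ + √(1 - u) * Real.cos x * (1 - κ)
  have hp_ge : √(1 - u) * Real.cos x ≤ p := by
    have : √(1 - u) * Real.cos x * √κ ≤ 1 :=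
      mul_le_one₀ (mul_le_one₀ hd.2 hx (Real.cos_le_one x)) hr.1 hr.2
    have hdiff : p - √(1 - u) * Real.cos x = √κ * (1 - √(1 - u) * Real.cos x * √κ) := by
      linear_combination (√(1 - u) * Real.cos x) * hr2
    exact sub_nonneg.1 (hdiff ▸ mul_nonneg hr.1 (sub_nonneg.2 this))
  have hp0 : 0 ≤ √(1 - u) * Real.cos x := mul_nonneg hd.1 hx
  refine re_complexSqrt_le (hp0.trans hp_ge) ?_ ?_
  · nlinarith [mul_nonneg hu1 (sq_nonneg (Real.sin x))]
  calc z.im ^ 2 = 4 * (√(1 - u) * Real.cos x) ^ 2 * ((1 - u) * Real.sin x ^ 2) := by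
        rw [hz, lineMap_exp_im, Real.sin_two_mul, mul_pow (√(1 - u)), hd2]; ring
    _ ≤ 4 * p ^ 2 * (p ^ 2 - z.re) := by gcongr

theorem re_complexSqrt_lineMap_le_of_one_le {x κ u : ℝ} (hκ : 1 ≤ κ) (hu : u ∈ Icc (0 : ℝ) 1) :
    (AffineMap.lineMap (Complex.exp (Complex.I * (2 * x : ℝ))) (κ : ℂ) u : ℂ).sqrt.re ≤ √κ := by
  refine (re_complexSqrt_le_sqrt_norm _).trans (Real.sqrt_le_sqrt ?_)
  have hmem := (convex_closedBall (0 : ℂ) κ).lineMap_mem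
    (x := Complex.exp (Complex.I * (2 * x : ℝ))) (y := κ)
    (by rwa [mem_closedBall_zero_iff, mul_comm, Complex.norm_exp_ofReal_mul_I])
    (by simpa using abs_of_nonneg (zero_le_one.trans hκ) |>.le) hu
  rwa [mem_closedBall_zero_iff] at hmem

theorem re_complexSqrt_lineMap_sub_sqrt_le {x κ u : ℝ} (hx : 0 ≤ Real.cos x) (hκ : 0 ≤ κ)
    (hu : u ∈ Icc (0 : ℝ) 1) :
    (AffineMap.lineMap (Complex.exp (Complex.I * (2 * x : ℝ))) (κ : ℂ) u : ℂ).sqrt.re - √κ ≤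
      √(1 - u) * Real.cos x * max (1 - κ) 0 := by
  rw [sub_le_iff_le_add']
  rcases le_total κ 1 with hκ1 | hκ1
  · rw [max_eq_left (sub_nonneg.2 hκ1)]
    exact re_complexSqrt_lineMap_le_of_le_one hx ⟨hκ, hκ1⟩ hu
  · rw [max_eq_right (sub_nonpos.2 hκ1), mul_zero, add_zero]
    exact re_complexSqrt_lineMap_le_of_one_le hκ1 hu

theorem intervalIntegrable_complexSqrt_lineMap_exp {α τ κ : ℝ} (hα : 0 < α) (hτ : 0 < Real.sin τ)
    (hκ : 0 ≤ κ) :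
    IntervalIntegrable (fun v : ℝ =>
      (AffineMap.lineMap (Complex.exp (Complex.I * τ)) (κ : ℂ) (v ^ α) : ℂ).sqrt) volume 0 1 :=
  Continuous.intervalIntegrable (continuous_iff_continuousAt.2 fun _ =>
    (continuousAt_complexSqrt_lineMap_exp hτ hκ).comp
      (f := fun v : ℝ => (AffineMap.lineMap (Complex.exp (Complex.I * τ)) (κ : ℂ) (v ^ α) : ℂ))
      ((continuous_lineMap_rpow hα).comp (Continuous.prodMk_right (κ : ℂ))).continuousAt) 0 1

theorem continuous_sqrt_one_sub_rpow {α : ℝ} (hα : 0 ≤ α) :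
    Continuous fun v : ℝ => √(1 - v ^ α) :=
  (continuous_const.sub (Real.continuous_rpow_const hα)).sqrt

theorem integral_sqrt_one_sub_rpow_pos {α : ℝ} (hα : 0 < α) :
    0 < ∫ v in (0 : ℝ)..1, √(1 - v ^ α) :=
  intervalIntegral.intervalIntegral_pos_of_pos_on
    ((continuous_sqrt_one_sub_rpow hα.le).intervalIntegrable 0 1)
    (fun _ hv => Real.sqrt_pos.2 (sub_pos.2 (Real.rpow_lt_one hv.1.le hv.2 hα))) one_pos

theorem re_rpowSegmentIntegral_complexSqrt_le {α x κ : ℝ} (hα : 0 < α)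
    (hx : 0 ≤ Real.cos x) (hsin : 0 < Real.sin (2 * x)) (hκ : 0 ≤ κ) :
    (rpowSegmentIntegral Complex.sqrt α (Complex.exp (Complex.I * (2 * x : ℝ))) κ).re ≤
      √κ + Real.cos x * max (1 - κ) 0 * ∫ v in (0 : ℝ)..1, √(1 - v ^ α) := by
  let z (v : ℝ) : ℂ := AffineMap.lineMap (Complex.exp (Complex.I * (2 * x : ℝ))) (κ : ℂ) (v ^ α)
  have hint : IntervalIntegrable (fun v => (z v).sqrt) volume 0 1 :=
    intervalIntegrable_complexSqrt_lineMap_exp hα hsin hκ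
  have hint_re : IntervalIntegrable (fun v => (z v).sqrt.re) volume 0 1 :=
    ⟨hint.1.re, hint.2.re⟩
  have hbound : IntervalIntegrable (fun v : ℝ => Real.cos x * max (1 - κ) 0 * √(1 - v ^ α))
      volume 0 1 :=
    ((continuous_sqrt_one_sub_rpow hα.le).const_mul _).intervalIntegrable 0 1
  have hre : (rpowSegmentIntegral Complex.sqrt α (Complex.exp (Complex.I * (2 * x : ℝ))) κ).re =
      ∫ v in (0 : ℝ)..1, (z v).sqrt.re := by
    rw [rpowSegmentIntegral, ← Complex.reCLM_apply, ← Complex.reCLM.intervalIntegral_comp_comm hint]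
    rfl
  calc _ ≤ ∫ v in (0 : ℝ)..1, (√κ + Real.cos x * max (1 - κ) 0 * √(1 - v ^ α)) := by
        rw [hre]
        refine intervalIntegral.integral_mono_on zero_le_one hint_re
          (intervalIntegrable_const.add hbound) fun v hv => sub_le_iff_le_add'.1 ?_
        rw [mul_comm, ← mul_assoc]
        exact re_complexSqrt_lineMap_sub_sqrt_le hx hκ (rpow_mem_Icc_zero_one hα.le hv)
    _ = _ := by
        rw [intervalIntegral.integral_add intervalIntegrable_const hbound,
          intervalIntegral.integral_const, intervalIntegral.integral_const_mul]
        simp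

-- On the closed upper half plane `Im √z = √((‖z‖ - Re z) / 2)`, which is continuous everywhere.
theorem continuousOn_im_rpowSegmentIntegral_complexSqrt {α τ : ℝ} (hα : 0 < α)
    (hτ : 0 < Real.sin τ) :
    ContinuousOn (fun κ : ℝ =>
      (rpowSegmentIntegral Complex.sqrt α (Complex.exp (Complex.I * τ)) κ).im) (Ici 0) := by
  let z (κ v : ℝ) : ℂ := AffineMap.lineMap (Complex.exp (Complex.I * τ)) (κ : ℂ) (v ^ α)
  have hz : Continuous fun p : ℝ × ℝ => z p.1 p.2 :=
    (continuous_lineMap_rpow hα).comp (f := fun p : ℝ × ℝ => ((p.1 : ℂ), p.2)) (by fun_prop)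
  have hcont : Continuous fun κ : ℝ => ∫ v in (0 : ℝ)..1, √((‖z κ v‖ - (z κ v).re) / 2) :=
    intervalIntegral.continuous_parametric_intervalIntegral_of_continuous'
      (f := fun κ v => √((‖z κ v‖ - (z κ v).re) / 2))
      ((hz.norm.sub (Complex.continuous_re.comp hz)).div_const 2).sqrt 0 1
  refine hcont.continuousOn.congr fun κ hκ => ?_
  rw [rpowSegmentIntegral, ← Complex.imCLM_apply, ← Complex.imCLM.intervalIntegral_comp_comm
    (intervalIntegrable_complexSqrt_lineMap_exp hα hτ hκ)]
  refine intervalIntegral.integral_congr fun v hv => ?_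
  rw [uIcc_of_le zero_le_one] at hv
  refine Complex.cpow_inv_two_im_eq_sqrt ?_
  rw [lineMap_exp_im]
  exact mul_nonneg (sub_nonneg.2 (rpow_mem_Icc_zero_one hα.le hv).2) hτ.le

/-- The point at which the line through `exp (I τ)` in the direction `exp (I θ)` meets the real
axis. -/
noncomputable def axisCrossing (τ θ : ℝ) : ℝ := Real.sin (θ - τ) / Real.sin θ

theorem axisCrossing_self (τ : ℝ) : axisCrossing τ τ = 0 := by simp [axisCrossing]

theorem exp_sub_exp_mul_ratio {τ θ : ℝ} (hθ : Real.sin θ ≠ 0) :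
    Complex.exp (Complex.I * τ) - Complex.exp (Complex.I * θ) * (Real.sin τ / Real.sin θ : ℝ) =
      axisCrossing τ θ := by
  rw [axisCrossing, Real.sin_sub, mul_comm, mul_comm Complex.I]
  apply Complex.ext
  · simp [Complex.exp_ofReal_mul_I_re, -Complex.ofReal_div]
    field_simp
  · simp [Complex.exp_ofReal_mul_I_im, -Complex.ofReal_div]
    field_simp
    simp

theorem lineMap_exp_axisCrossing {τ θ : ℝ} (hθ : Real.sin θ ≠ 0) (u : ℝ) :
    AffineMap.lineMap (Complex.exp (Complex.I * τ)) (axisCrossing τ θ : ℂ) u =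
      Complex.exp (Complex.I * τ) -
        Complex.exp (Complex.I * θ) * (Real.sin τ / Real.sin θ * u : ℝ) := by
  rw [← exp_sub_exp_mul_ratio hθ, AffineMap.lineMap_apply_module]
  simp only [Complex.real_smul]
  push_cast
  ring

theorem hasDerivAt_axisCrossing {τ θ : ℝ} (hθ : Real.sin θ ≠ 0) :
    HasDerivAt (axisCrossing τ) (Real.sin τ / Real.sin θ ^ 2) θ := by
  refine ((((hasDerivAt_id θ).sub_const τ).sin).div (Real.hasDerivAt_sin θ) hθ).congr_deriv ?_
  have hsin : Real.sin τ =
      Real.sin θ * Real.cos (θ - τ) - Real.cos θ * Real.sin (θ - τ) := by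
    rw [← Real.sin_sub, sub_sub_cancel]
  rw [hsin, id]
  ring

theorem deriv_axisCrossing_eq_mul {τ θ : ℝ} (hθ : Real.sin θ ≠ 0) :
    ((Real.sin τ / Real.sin θ ^ 2 : ℝ) : ℂ) =
      (Complex.I - (Real.cos θ / Real.sin θ : ℝ)) *
        (axisCrossing τ θ - Complex.exp (Complex.I * τ)) := by
  have hθ' : (Real.sin θ : ℂ) ≠ 0 := Complex.ofReal_ne_zero.2 hθ
  have hone : (Real.sin θ : ℂ) ^ 2 + (Real.cos θ : ℂ) ^ 2 = 1 := mod_cast Real.sin_sq_add_cos_sq θ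
  rw [← exp_sub_exp_mul_ratio hθ, sub_sub_cancel_left, mul_comm Complex.I (θ : ℂ),
    Complex.exp_mul_I, ← Complex.ofReal_cos, ← Complex.ofReal_sin]
  simp only [Complex.ofReal_div, Complex.ofReal_pow]
  field_simp
  linear_combination (Real.sin τ : ℂ) * ((Real.sin θ : ℂ) ^ 2 * Complex.I_sq - hone)

section

variable {α θ : ℝ}

theorem t0_mul_add_two (hα0 : 0 < α) : t0 α * (α + 2) = 2 * Real.pi * α :=
  div_mul_cancel₀ _ (by positivity)

theorem t0_pos (hα0 : 0 < α) : 0 < t0 α := by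
  unfold t0
  positivity

theorem t0_lt_pi (hα0 : 0 < α) (hα2 : α < 2) : t0 α < Real.pi := by
  rw [t0, div_lt_iff₀ (by positivity)]
  nlinarith [Real.pi_pos]

theorem sin_t0_pos (hα0 : 0 < α) (hα2 : α < 2) : 0 < Real.sin (t0 α) :=
  Real.sin_pos_of_pos_of_lt_pi (t0_pos hα0) (t0_lt_pi hα0 hα2)

theorem cos_half_t0_pos (hα0 : 0 < α) (hα2 : α < 2) : 0 < Real.cos (t0 α / 2) :=
  Real.cos_pos_of_mem_Ioo ⟨by linarith [t0_pos hα0, Real.pi_pos], by linarith [t0_lt_pi hα0 hα2]⟩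

theorem sin_pos_of_mem_Ico_t0 (hα0 : 0 < α) (hθ : θ ∈ Ico (t0 α) Real.pi) : 0 < Real.sin θ :=
  Real.sin_pos_of_pos_of_lt_pi ((t0_pos hα0).trans_le hθ.1) hθ.2

theorem axisCrossing_t0_pos (hα0 : 0 < α) (hθ : θ ∈ Ioo (t0 α) Real.pi) :
    0 < axisCrossing (t0 α) θ :=
  div_pos (Real.sin_pos_of_pos_of_lt_pi (sub_pos.2 hθ.1) (by linarith [hθ.2, t0_pos hα0]))
    (sin_pos_of_mem_Ico_t0 hα0 (Ioo_subset_Ico_self hθ))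

theorem axisCrossing_t0_nonneg (hα0 : 0 < α) (hθ : θ ∈ Ico (t0 α) Real.pi) :
    0 ≤ axisCrossing (t0 α) θ := by
  rcases hθ.1.eq_or_lt with h | h
  · rw [← h, axisCrossing_self]
  · exact (axisCrossing_t0_pos hα0 ⟨h, hθ.2⟩).le

theorem cos_div_le_neg_cos_half_t0 (hα0 : 0 < α) (hθ0 : t0 α ≤ θ) (hθ : θ ≤ Real.pi * α) :
    Real.cos (θ / α) ≤ -Real.cos (t0 α / 2) := by
  have ht0 := t0_mul_add_two hα0
  rw [← Real.cos_pi_sub]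
  refine Real.cos_le_cos_of_nonneg_of_le_pi ?_ ((div_le_iff₀ hα0).2 hθ) ?_
  · nlinarith [Real.pi_pos]
  · rw [le_div_iff₀ hα0]
    linarith

theorem Z0_pos (hα0 : 0 < α) (hα2 : α < 2) (hθ : 0 < Real.sin θ) : 0 < Z0 α θ :=
  Real.rpow_pos_of_pos (div_pos (sin_t0_pos hα0 hα2) hθ) _

theorem Z0_rpow (hα0 : 0 < α) (hα2 : α < 2) (hθ : 0 < Real.sin θ) :
    Z0 α θ ^ α = Real.sin (t0 α) / Real.sin θ := by
  rw [Z0, one_div, Real.rpow_inv_rpow (div_pos (sin_t0_pos hα0 hα2) hθ).le hα0.ne']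

theorem Z0_t0 (hα0 : 0 < α) (hα2 : α < 2) : Z0 α (t0 α) = 1 := by
  rw [Z0, div_self (sin_t0_pos hα0 hα2).ne', Real.one_rpow]

theorem hasDerivAt_Z0 (hα0 : 0 < α) (hα2 : α < 2) (hθ : 0 < Real.sin θ) :
    HasDerivAt (Z0 α) (-(Z0 α θ * Real.cos θ / (α * Real.sin θ))) θ := by
  have hratio := div_pos (sin_t0_pos hα0 hα2) hθ
  have hinv := ((Real.hasDerivAt_sin θ).fun_inv hθ.ne').const_mul (Real.sin (t0 α))
  have hrpow := hinv.rpow_const (p := 1 / α) (.inl hratio.ne')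
  refine hrpow.congr_deriv ?_
  rw [← div_eq_mul_inv, Real.rpow_sub_one hratio.ne', ← Z0]
  have := (sin_t0_pos hα0 hα2).ne'
  field_simp

theorem cos_two_mul_sub_half_t0_add_nonneg (hα0 : 0 < α) (hα2 : α < 2)
    (hθ : θ ∈ Icc (t0 α) Real.pi) :
    0 ≤ Real.cos (2 * θ - t0 α / 2) + (1 + 2 * α) * Real.cos (t0 α / 2) := by
  have ht0 := t0_mul_add_two hα0
  have hcos := cos_half_t0_pos hα0 hα2
  rcases le_total α 1 with hα1 | hα1
  · have hjordan : (2 - α) / (α + 2) ≤ Real.cos (t0 α / 2) := by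
      have := Real.one_sub_mul_le_cos (x := t0 α / 2) (by linarith [t0_pos hα0])
        (by linarith [t0_lt_pi hα0 hα2])
      convert this using 1
      rw [t0]
      field_simp
      ring
    have hone : 1 ≤ (1 + 2 * α) * Real.cos (t0 α / 2) := by
      rw [div_le_iff₀ (by positivity)] at hjordan
      nlinarith
    linarith [Real.neg_one_le_cos (2 * θ - t0 α / 2)]
  · have hthree : Real.cos (3 * (t0 α / 2)) ≤ Real.cos (2 * θ - t0 α / 2) := by
      rw [← Real.cos_two_pi_sub, ← Real.cos_two_pi_sub (2 * θ - t0 α / 2)]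
      exact Real.cos_le_cos_of_nonneg_of_le_pi (by linarith [hθ.2, t0_pos hα0])
        (by nlinarith [Real.pi_pos]) (by linarith [hθ.1])
    rw [Real.cos_three_mul] at hthree
    nlinarith [pow_pos hcos 3]

theorem cos_mul_sin_sub_sin_add_mul_sin (α θ τ : ℝ) :
    Real.cos θ * (Real.sin θ - Real.sin (θ - τ)) + α * Real.sin τ =
      Real.sin (τ / 2) * (Real.cos (2 * θ - τ / 2) + (1 + 2 * α) * Real.cos (τ / 2)) := by
  have hdiff : Real.sin θ - Real.sin (θ - τ) = 2 * Real.sin (τ / 2) * Real.cos (θ - τ / 2) := by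
    rw [Real.sin_sub_sin]; ring_nf
  have hsin : Real.sin τ = 2 * Real.sin (τ / 2) * Real.cos (τ / 2) := by
    rw [← Real.sin_two_mul, mul_div_cancel₀ _ two_ne_zero]
  have hcos : 2 * Real.cos θ * Real.cos (θ - τ / 2) =
      Real.cos (τ / 2) + Real.cos (2 * θ - τ / 2) := by
    rw [Real.two_mul_cos_mul_cos]; ring_nf
  rw [hdiff, hsin]
  linear_combination Real.sin (τ / 2) * hcos

theorem antitoneOn_Z0_mul_one_sub_axisCrossing (hα0 : 0 < α) (hα2 : α < 2) :
    AntitoneOn (fun θ => Z0 α θ * (1 - axisCrossing (t0 α) θ)) (Ico (t0 α) Real.pi) := by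
  have hderiv (θ : ℝ) (hθ : θ ∈ Ico (t0 α) Real.pi) :
      HasDerivAt (fun θ => Z0 α θ * (1 - axisCrossing (t0 α) θ))
        (-(Z0 α θ / (α * Real.sin θ ^ 2) *
          (Real.cos θ * (Real.sin θ - Real.sin (θ - t0 α)) + α * Real.sin (t0 α)))) θ := by
    have hsin := sin_pos_of_mem_Ico_t0 hα0 hθ
    refine ((hasDerivAt_Z0 hα0 hα2 hsin).mul
      ((hasDerivAt_axisCrossing hsin.ne').const_sub 1)).congr_deriv ?_
    rw [axisCrossing]
    field_simp
    ring
  refine antitoneOn_of_hasDerivWithinAt_nonpos (convex_Ico _ _)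
    (fun θ hθ => (hderiv θ hθ).continuousAt.continuousWithinAt)
    (fun θ hθ => (hderiv θ (interior_subset hθ)).hasDerivWithinAt) fun θ hθ => ?_
  replace hθ := interior_subset hθ
  have hZ := Z0_pos hα0 hα2 (sin_pos_of_mem_Ico_t0 hα0 hθ)
  have hhalf : 0 < Real.sin (t0 α / 2) := Real.sin_pos_of_pos_of_lt_pi
    (half_pos (t0_pos hα0)) (by linarith [t0_pos hα0, t0_lt_pi hα0 hα2])
  have hcos := cos_two_mul_sub_half_t0_add_nonneg hα0 hα2 (Ico_subset_Icc_self hθ)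
  rw [cos_mul_sin_sub_sin_add_mul_sin]
  exact neg_nonpos.2 (by positivity)

theorem Z0_mul_one_sub_axisCrossing_le_one (hα0 : 0 < α) (hα2 : α < 2)
    (hθ : θ ∈ Ico (t0 α) Real.pi) : Z0 α θ * (1 - axisCrossing (t0 α) θ) ≤ 1 := by
  simpa [Z0_t0 hα0 hα2, axisCrossing_self] using
    antitoneOn_Z0_mul_one_sub_axisCrossing hα0 hα2 ⟨le_rfl, t0_lt_pi hα0 hα2⟩ hθ hθ.1

/-! ### The contour integral and its derivative -/

/-- The contour integral `∫ √(e^{i t₀} - e^{iθ} t ^ α) dt` over `[0, Z₀(θ)]`. The function `g_θ` is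
`-i` times the integrand. -/
noncomputable def contourIntegral (α θ : ℝ) : ℂ :=
  ∫ t in (0 : ℝ)..Z0 α θ,
    (Complex.exp (Complex.I * t0 α) - Complex.exp (Complex.I * θ) * (t ^ α : ℝ)).sqrt

theorem lineMap_exp_axisCrossing_div_Z0 (hα0 : 0 < α) (hα2 : α < 2) (hθ : 0 < Real.sin θ) {t : ℝ}
    (ht : 0 ≤ t) :
    AffineMap.lineMap (Complex.exp (Complex.I * t0 α)) (axisCrossing (t0 α) θ : ℂ)
        ((t / Z0 α θ) ^ α) =
      Complex.exp (Complex.I * t0 α) - Complex.exp (Complex.I * θ) * (t ^ α : ℝ) := by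
  have hratio := div_pos (sin_t0_pos hα0 hα2) hθ
  rw [lineMap_exp_axisCrossing hθ.ne', Real.div_rpow ht (Z0_pos hα0 hα2 hθ).le,
    Z0_rpow hα0 hα2 hθ, mul_div_cancel₀ _ hratio.ne']

theorem contourIntegral_eq_smul (hα0 : 0 < α) (hα2 : α < 2) (hθ : 0 < Real.sin θ) :
    contourIntegral α θ = Z0 α θ •
      rpowSegmentIntegral Complex.sqrt α (Complex.exp (Complex.I * t0 α))
        (axisCrossing (t0 α) θ) := by
  have hZ := Z0_pos hα0 hα2 hθ
  have hcongr : contourIntegral α θ = ∫ t in (0 : ℝ)..Z0 α θ,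
      (AffineMap.lineMap (Complex.exp (Complex.I * t0 α)) (axisCrossing (t0 α) θ : ℂ)
        ((t / Z0 α θ) ^ α) : ℂ).sqrt := by
    refine intervalIntegral.integral_congr fun t ht => ?_
    rw [uIcc_of_le hZ.le] at ht
    simp only [lineMap_exp_axisCrossing_div_Z0 hα0 hα2 hθ ht.1]
  rw [hcongr, intervalIntegral.integral_comp_div (fun v : ℝ =>
    (AffineMap.lineMap (Complex.exp (Complex.I * t0 α)) (axisCrossing (t0 α) θ : ℂ)
      (v ^ α) : ℂ).sqrt) hZ.ne', zero_div, div_self hZ.ne', rpowSegmentIntegral]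

theorem continuousOn_im_contourIntegral (hα0 : 0 < α) (hα2 : α < 2) :
    ContinuousOn (fun θ => (contourIntegral α θ).im) (Ico (t0 α) Real.pi) := by
  have hsin (θ : ℝ) (hθ : θ ∈ Ico (t0 α) Real.pi) := sin_pos_of_mem_Ico_t0 hα0 hθ
  have hZ : ContinuousOn (Z0 α) (Ico (t0 α) Real.pi) := fun θ hθ =>
    (hasDerivAt_Z0 hα0 hα2 (hsin θ hθ)).continuousAt.continuousWithinAt
  have hκ : ContinuousOn (axisCrossing (t0 α)) (Ico (t0 α) Real.pi) := fun θ hθ =>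
    (hasDerivAt_axisCrossing (hsin θ hθ).ne').continuousAt.continuousWithinAt
  have hS := (continuousOn_im_rpowSegmentIntegral_complexSqrt hα0 (sin_t0_pos hα0 hα2)).comp hκ
    fun θ hθ => axisCrossing_t0_nonneg hα0 hθ
  refine (hZ.mul hS).congr fun θ hθ => ?_
  rw [contourIntegral_eq_smul hα0 hα2 (hsin θ hθ), Complex.real_smul, Complex.im_ofReal_mul]
  rfl

-- With `S` the segment integral, `κ` the crossing point and `Z = Z₀(θ)`, one has
-- `dS/dκ = (√κ - S) / (α (κ - e^{i t₀}))` and `κ - e^{i t₀} = -Z ^ α e^{iθ}`.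
theorem hasDerivAt_contourIntegral (hα0 : 0 < α) (hα2 : α < 2) (hθ : θ ∈ Ioo (t0 α) Real.pi) :
    HasDerivAt (contourIntegral α)
      ((Complex.I * ((Z0 α θ * √(axisCrossing (t0 α) θ) : ℝ) - contourIntegral α θ) -
        (Z0 α θ * (Real.cos θ / Real.sin θ) * √(axisCrossing (t0 α) θ) : ℝ)) / α) θ := by
  have hτ := sin_t0_pos hα0 hα2
  have hsin := sin_pos_of_mem_Ico_t0 hα0 (Ioo_subset_Ico_self hθ)
  have hκ := axisCrossing_t0_pos hα0 hθ
  have hκ' := deriv_axisCrossing_eq_mul (τ := t0 α) hsin.ne'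
  have hne : (axisCrossing (t0 α) θ - Complex.exp (Complex.I * t0 α) : ℂ) ≠ 0 :=
    right_ne_zero_of_mul (hκ' ▸ Complex.ofReal_ne_zero.2 (by positivity))
  have hS := (hasDerivAt_rpowSegmentIntegral hα0 Complex.isOpen_slitPlane
    Complex.differentiableOn_sqrt (segment_exp_subset_slitPlane hτ hκ)
    (sub_ne_zero.1 hne).symm).scomp θ (hasDerivAt_axisCrossing hsin.ne').ofReal_comp
  have hJ := (hasDerivAt_Z0 hα0 hα2 hsin).smul hS
  have heq : contourIntegral α =ᶠ[𝓝 θ] fun θ => Z0 α θ •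
      rpowSegmentIntegral Complex.sqrt α (Complex.exp (Complex.I * t0 α))
        (axisCrossing (t0 α) θ) := by
    filter_upwards [isOpen_Ioo.mem_nhds hθ] with φ hφ
    exact contourIntegral_eq_smul hα0 hα2 (sin_pos_of_mem_Ico_t0 hα0 (Ioo_subset_Ico_self hφ))
  refine (hJ.congr_of_eventuallyEq heq).congr_deriv ?_
  have hsqrt : (axisCrossing (t0 α) θ : ℂ).sqrt = √(axisCrossing (t0 α) θ) :=
    Complex.sqrt_of_nonneg (by simpa using hκ.le)
  have hscalar : ((Real.sin (t0 α) / Real.sin θ ^ 2 : ℝ) : ℂ) *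
      (α * (axisCrossing (t0 α) θ - Complex.exp (Complex.I * t0 α)))⁻¹ =
        (Complex.I - (Real.cos θ / Real.sin θ : ℝ)) / α := by
    rw [hκ', ← div_eq_mul_inv, mul_div_mul_right _ _ hne]
  rw [smul_smul (_ : ℂ), smul_eq_mul (_ : ℂ) (_ : ℂ), hscalar, hsqrt,
    contourIntegral_eq_smul hα0 hα2 hsin]
  simp only [Complex.real_smul, Function.comp_apply, Complex.ofReal_mul,
    Complex.ofReal_div, Complex.ofReal_neg]
  ring

theorem re_contourIntegral_le (hα0 : 0 < α) (hα2 : α < 2) (hθ : θ ∈ Ico (t0 α) Real.pi) :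
    (contourIntegral α θ).re ≤ Z0 α θ * √(axisCrossing (t0 α) θ) +
      Real.cos (t0 α / 2) * ∫ ξ in (0 : ℝ)..1, √(1 - ξ ^ α) := by
  have hsin := sin_pos_of_mem_Ico_t0 hα0 hθ
  have hZ := Z0_pos hα0 hα2 hsin
  have hcos := cos_half_t0_pos hα0 hα2
  have hC := integral_sqrt_one_sub_rpow_pos hα0
  have hS := re_rpowSegmentIntegral_complexSqrt_le hα0 hcos.le
    (by rw [mul_div_cancel₀ _ two_ne_zero]; exact sin_t0_pos hα0 hα2)
    (axisCrossing_t0_nonneg hα0 hθ)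
  rw [mul_div_cancel₀ _ two_ne_zero] at hS
  have hgap : Z0 α θ * max (1 - axisCrossing (t0 α) θ) 0 ≤ 1 := by
    rw [mul_max_of_nonneg _ _ hZ.le, mul_zero]
    exact max_le (Z0_mul_one_sub_axisCrossing_le_one hα0 hα2 hθ) zero_le_one
  rw [contourIntegral_eq_smul hα0 hα2 hsin, Complex.real_smul, Complex.re_ofReal_mul]
  set C := ∫ ξ in (0 : ℝ)..1, √(1 - ξ ^ α)
  calc _ ≤ Z0 α θ * (√(axisCrossing (t0 α) θ) +
        Real.cos (t0 α / 2) * max (1 - axisCrossing (t0 α) θ) 0 * C) := by gcongr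
    _ = Z0 α θ * √(axisCrossing (t0 α) θ) +
        Z0 α θ * max (1 - axisCrossing (t0 α) θ) 0 * (Real.cos (t0 α / 2) * C) := by ring
    _ ≤ _ := add_le_add le_rfl (mul_le_of_le_one_left (by positivity) hgap)

/-- The function `ρ_α` with `g_θ` written as `-i` times a principal square root. -/
noncomputable def rho (α θ : ℝ) : ℝ :=
  (contourIntegral α θ).im - 2 * Real.sin (θ / α) * ∫ ξ in (0 : ℝ)..1, √(1 - ξ ^ α)

theorem hasDerivAt_rho (hα0 : 0 < α) (hα2 : α < 2) (hθ : θ ∈ Ioo (t0 α) Real.pi) :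
    HasDerivAt (rho α)
      ((Z0 α θ * √(axisCrossing (t0 α) θ) - (contourIntegral α θ).re -
        2 * Real.cos (θ / α) * ∫ ξ in (0 : ℝ)..1, √(1 - ξ ^ α)) / α) θ := by
  have him := Complex.imCLM.hasFDerivAt.comp_hasDerivAt θ (hasDerivAt_contourIntegral hα0 hα2 hθ)
  have hsin := (((hasDerivAt_id θ).div_const α).sin.const_mul 2).mul_const
    (∫ ξ in (0 : ℝ)..1, √(1 - ξ ^ α))
  refine (him.sub hsin).congr_deriv ?_
  simp only [Complex.imCLM_apply, Complex.div_ofReal_im, Complex.sub_im, Complex.I_mul_im,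
    Complex.sub_re, Complex.ofReal_re, Complex.ofReal_im, id]
  ring

theorem deriv_rho_pos (hα0 : 0 < α) (hα2 : α < 2)
    (hθ : θ ∈ Ioo (t0 α) (min Real.pi (Real.pi * α))) : 0 < deriv (rho α) θ := by
  have hθπ : θ ∈ Ioo (t0 α) Real.pi := ⟨hθ.1, hθ.2.trans_le (min_le_left _ _)⟩
  have hre := re_contourIntegral_le hα0 hα2 (Ioo_subset_Ico_self hθπ)
  have hcos := cos_div_le_neg_cos_half_t0 hα0 hθ.1.le (hθ.2.le.trans (min_le_right _ _))
  have hC := integral_sqrt_one_sub_rpow_pos hα0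
  have hpos := mul_pos (cos_half_t0_pos hα0 hα2) hC
  rw [(hasDerivAt_rho hα0 hα2 hθπ).deriv]
  refine div_pos ?_ hα0
  linarith [mul_le_mul_of_nonneg_right hcos hC.le]

theorem strictMonoOn_rho (hα0 : 0 < α) (hα2 : α < 2) :
    StrictMonoOn (rho α) (Ico (t0 α) (min Real.pi (Real.pi * α))) := by
  refine strictMonoOn_of_deriv_pos (convex_Ico _ _) ?_ fun θ hθ => ?_
  · have him := (continuousOn_im_contourIntegral hα0 hα2).mono
      (Ico_subset_Ico_right (min_le_left Real.pi (Real.pi * α)))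
    exact him.sub (by fun_prop)
  · rw [interior_Ico] at hθ
    exact deriv_rho_pos hα0 hα2 hθ

theorem continuousOn_contourIntegral_integrand (hα0 : 0 < α) (hα2 : α < 2)
    (hθ : θ ∈ Ico (t0 α) Real.pi) :
    ContinuousOn (fun t : ℝ =>
      (Complex.exp (Complex.I * t0 α) - Complex.exp (Complex.I * θ) * (t ^ α : ℝ)).sqrt)
      (Icc 0 (Z0 α θ)) := by
  have hpow : Continuous fun t : ℝ => t ^ α := Real.continuous_rpow_const hα0.le
  intro t ht
  refine (ContinuousAt.comp (g := Complex.sqrt) ?_ (by fun_prop)).continuousWithinAt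
  rw [← lineMap_exp_axisCrossing_div_Z0 hα0 hα2 (sin_pos_of_mem_Ico_t0 hα0 hθ) ht.1]
  exact continuousAt_complexSqrt_lineMap_exp (sin_t0_pos hα0 hα2) (axisCrossing_t0_nonneg hα0 hθ)

theorem rho_eq (α θ : ℝ) : rho α θ =
    (∫ t in (0 : ℝ)..Z0 α θ, -Complex.I * (Complex.exp (Complex.I * t0 α) -
      Complex.exp (Complex.I * θ) * (t ^ α : ℝ)).sqrt).re -
        2 * Real.sin (θ / α) * ∫ ξ in (0 : ℝ)..1, √(1 - ξ ^ α) := by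
  rw [intervalIntegral.integral_const_mul, ← contourIntegral, rho]
  simp

end

/-- for every `α ∈ (0,2)`, the function `ρ_α` is strictly increasing on
`[t₀(α), min(π, πα))`. -/
theorem stmt16 (α : ℝ) (hα0 : 0 < α) (hα2 : α < 2) (ρ : ℝ → ℝ)
    (hρ : ∀ θ ∈ Set.Ico (t0 α) (min Real.pi (Real.pi * α)), ∀ g : ℝ → ℂ,
      ContinuousOn g (Set.Icc 0 (Z0 α θ)) →
      (∀ t ∈ Set.Icc (0 : ℝ) (Z0 α θ),
        g t ^ 2 = Complex.exp (Complex.I * (θ : ℂ)) * ((t ^ α : ℝ) : ℂ)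
          - Complex.exp (Complex.I * ((t0 α : ℝ) : ℂ))) →
      g 0 = -Complex.I * Complex.exp (Complex.I * ((t0 α / 2 : ℝ) : ℂ)) →
      ρ θ = (∫ t in (0 : ℝ)..(Z0 α θ), g t).re
        - 2 * Real.sin (θ / α) * ∫ ξ in (0 : ℝ)..1, Real.sqrt (1 - ξ ^ α)) :
    ∀ θ₁ θ₂ : ℝ, t0 α ≤ θ₁ → θ₁ < θ₂ → θ₂ < min Real.pi (Real.pi * α) →
      ρ θ₁ < ρ θ₂ := by
  have hτ : t0 α ∈ Ioc (-Real.pi) Real.pi :=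
    ⟨by linarith [t0_pos hα0, Real.pi_pos], (t0_lt_pi hα0 hα2).le⟩
  have hrho (θ : ℝ) (hθ : θ ∈ Ico (t0 α) (min Real.pi (Real.pi * α))) : ρ θ = rho α θ := by
    have hθπ : θ ∈ Ico (t0 α) Real.pi := ⟨hθ.1, hθ.2.trans_le (min_le_left _ _)⟩
    rw [rho_eq]
    refine hρ θ hθ _
      (continuousOn_const.mul (continuousOn_contourIntegral_integrand hα0 hα2 hθπ))
      (fun t _ => ?_) ?_
    · rw [mul_pow, complexSqrt_sq, neg_sq, Complex.I_sq]
      ring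
    · rw [Real.zero_rpow hα0.ne', Complex.ofReal_zero, mul_zero, sub_zero,
        complexSqrt_exp_I_mul_ofReal hτ]
  intro θ₁ θ₂ h₁ h₁₂ h₂
  have hθ₁ : θ₁ ∈ Ico (t0 α) (min Real.pi (Real.pi * α)) := ⟨h₁, h₁₂.trans h₂⟩
  have hθ₂ : θ₂ ∈ Ico (t0 α) (min Real.pi (Real.pi * α)) := ⟨h₁.trans h₁₂.le, h₂⟩
  rw [hrho θ₁ hθ₁, hrho θ₂ hθ₂]
  exact strictMonoOn_rho hα0 hα2 hθ₁ hθ₂ h₁₂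
end

section
/- For α = 1 (so t₀(1) = 2π/3) and every θ ∈ [2π/3, π), one has ρ_1(θ) = (2/3)·((sin(θ − 2π/3)/sin θ)^{3/2} − 1)·sin θ, and the unique zero of ρ_1 in (2π/3, π) is θ = 5π/6 (that is, θ₀(1) = 5π/6). -/
/-!
For `α = 1` the radicand is affine in `t`, so the branch in the definition of `ρ` can be written
with the principal power: `g t = -i (exp (i s) - exp (i θ) t) ^ (1/2)`, where `s = t₀(1)`. Indeed,
as `t` runs over `[0, sin s / sin θ]`, the imaginary part `sin s - t sin θ` of the base decreases
to `0`, and the segment ends at the nonnegative real number `S = sin (θ - s) / sin θ`, so it never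
meets the cut. The real part of `∫ g` is then `(2/3) (sin (3s/2 - θ) + S ^ (3/2) sin θ)`.
At `s = 2π/3` the first sine is `sin θ`, and subtracting `2 sin θ ∫ √(1 - ξ) = (4/3) sin θ` gives
the formula. A zero means `S = 1`, and `sin θ - sin (θ - s) = 2 sin (s/2) cos (θ - s/2)` places it
at `(π + s) / 2`.
-/

open MeasureTheory Set

section AffinePower

variable {a b r : ℂ} {u v : ℝ}

theorem continuousOn_sub_mul_cpow (hr : 0 < r.re) {A : Set ℝ}
    (hcut : ∀ t ∈ A, 0 ≤ (a - b * t).re ∨ (a - b * t).im ≠ 0) :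
    ContinuousOn (fun t : ℝ ↦ (a - b * t) ^ r) A := fun t ht ↦
  ((Complex.continuousAt_cpow_const_of_re_pos (hcut t ht) hr).comp
    (f := fun t : ℝ ↦ a - b * t) (by fun_prop)).continuousWithinAt

theorem hasDerivAt_sub_mul_cpow {t : ℝ} (ht : a - b * t ∈ Complex.slitPlane) :
    HasDerivAt (fun t : ℝ ↦ (a - b * t) ^ r) (r * (a - b * t) ^ (r - 1) * -b) t := by
  have haffine : HasDerivAt (fun z : ℂ ↦ a - b * z) (-b) (t : ℂ) := by
    simpa using ((hasDerivAt_id (t : ℂ)).const_mul b).const_sub a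
  exact (haffine.cpow_const ht).comp_ofReal

theorem countable_setOf_sub_mul_eq_zero (hb : b ≠ 0) : {t : ℝ | a - b * t = 0}.Countable := by
  refine Set.Subsingleton.countable fun x hx y hy ↦ ?_
  exact Complex.ofReal_injective (mul_left_cancel₀ hb (sub_right_injective (hx.trans hy.symm)))

theorem integral_sub_mul_cpow (hb : b ≠ 0) (hr : 0 < r.re)
    (hcut : ∀ t ∈ uIcc u v, 0 ≤ (a - b * t).re ∨ (a - b * t).im ≠ 0) :
    ∫ t in u..v, (a - b * t) ^ r =
      ((a - b * u) ^ (r + 1) - (a - b * v) ^ (r + 1)) / ((r + 1) * b) := by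
  have hre : 0 < (r + 1).re := by
    simp only [Complex.add_re, Complex.one_re]
    positivity
  have hne : r + 1 ≠ 0 := Complex.ne_zero_of_re_pos hre
  have hderiv : ∀ t ∈ Ioo (min u v) (max u v) \ {t : ℝ | a - b * t = 0},
      HasDerivAt (fun t : ℝ ↦ -((r + 1) * b)⁻¹ * (a - b * t) ^ (r + 1)) ((a - b * t) ^ r) t := by
    rintro t ⟨ht, hzero⟩
    have hslit : a - b * t ∈ Complex.slitPlane := by
      refine (hcut t (Ioo_subset_Icc_self ht)).elim (fun hnonneg ↦ ?_) Or.inr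
      exact or_iff_not_imp_right.2 fun him ↦ hnonneg.lt_of_ne fun hre ↦
        hzero (Complex.ext hre.symm (not_not.1 him))
    refine ((hasDerivAt_sub_mul_cpow hslit).const_mul _).congr_deriv ?_
    rw [add_sub_cancel_right]
    field_simp
  have hcont : ContinuousOn (fun t : ℝ ↦ -((r + 1) * b)⁻¹ * (a - b * t) ^ (r + 1)) (uIcc u v) :=
    continuousOn_const.mul (continuousOn_sub_mul_cpow hre hcut)
  rw [integral_eq_of_hasDerivAt_off_countable _ _ (countable_setOf_sub_mul_eq_zero hb) hcont hderiv
    (continuousOn_sub_mul_cpow hr hcut).intervalIntegrable]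
  ring

end AffinePower

theorem integral_sqrt_one_sub : ∫ ξ in (0 : ℝ)..1, √(1 - ξ) = 2 / 3 := by
  rw [intervalIntegral.integral_comp_sub_left Real.sqrt]
  simp only [Real.sqrt_eq_rpow]
  rw [integral_rpow (by norm_num)]
  norm_num

theorem exp_I_mul_cpow_ofReal {s : ℝ} (hs : s ∈ Ioc (-Real.pi) Real.pi) (r : ℝ) :
    Complex.exp (Complex.I * s) ^ (r : ℂ) = Complex.exp (Complex.I * (s * r : ℝ)) := by
  have him : (Complex.I * s).im = s := by simp
  rw [Complex.cpow_def_of_ne_zero (Complex.exp_ne_zero _),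
    Complex.log_exp (him.symm ▸ hs.1) (him.symm ▸ hs.2), Complex.ofReal_mul, mul_assoc]

theorem im_exp_sub_exp_mul (s θ t : ℝ) :
    (Complex.exp (Complex.I * s) - Complex.exp (Complex.I * θ) * t).im =
      Real.sin s - Real.sin θ * t := by
  rw [mul_comm Complex.I, mul_comm Complex.I, Complex.sub_im, Complex.im_mul_ofReal,
    Complex.exp_ofReal_mul_I_im, Complex.exp_ofReal_mul_I_im]

theorem exp_sub_exp_mul_sin_div_sin {s θ : ℝ} (hθ : Real.sin θ ≠ 0) :
    Complex.exp (Complex.I * s) - Complex.exp (Complex.I * θ) * (Real.sin s / Real.sin θ : ℝ) =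
      (Real.sin (θ - s) / Real.sin θ : ℝ) := by
  apply Complex.ext
  · rw [mul_comm Complex.I, mul_comm Complex.I, Complex.sub_re, Complex.re_mul_ofReal,
      Complex.exp_ofReal_mul_I_re, Complex.exp_ofReal_mul_I_re, Complex.ofReal_re, Real.sin_sub]
    field_simp
  · rw [im_exp_sub_exp_mul, mul_div_cancel₀ _ hθ, sub_self, Complex.ofReal_im]

theorem sin_sub_eq_sin_iff {s θ : ℝ} (hs : s ∈ Ioo 0 (2 * Real.pi))
    (hθ : θ - s / 2 ∈ Icc 0 Real.pi) :
    Real.sin (θ - s) = Real.sin θ ↔ θ = (Real.pi + s) / 2 := by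
  have hsin : Real.sin (s / 2) ≠ 0 :=
    (Real.sin_pos_of_pos_of_lt_pi (by linarith [hs.1]) (by linarith [hs.2])).ne'
  have hpi_half : Real.pi / 2 ∈ Icc 0 Real.pi := by
    constructor <;> linarith [Real.pi_pos]
  have hdiff : Real.sin θ - Real.sin (θ - s) = 2 * Real.sin (s / 2) * Real.cos (θ - s / 2) := by
    rw [Real.sin_sub_sin]
    ring_nf
  calc Real.sin (θ - s) = Real.sin θ
      ↔ Real.sin θ - Real.sin (θ - s) = 0 := by rw [sub_eq_zero, eq_comm]
    _ ↔ Real.cos (θ - s / 2) = Real.cos (Real.pi / 2) := by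
      rw [hdiff, Real.cos_pi_div_two, mul_eq_zero_iff_left (mul_ne_zero two_ne_zero hsin)]
    _ ↔ θ - s / 2 = Real.pi / 2 := Real.injOn_cos.eq_iff hθ hpi_half
    _ ↔ θ = (Real.pi + s) / 2 := by rw [sub_eq_iff_eq_add, add_div]

/-- The square root `g` of `exp (i θ) t - exp (i s)` along which `ρ` is integrated when `α = 1`.
The factor `-i` turns the radicand around, so that the principal power is evaluated in the closed
upper half-plane, and gives `g 0 = -i exp (i s / 2)`. -/
noncomputable def airyBranch (s θ t : ℝ) : ℂ :=
  -Complex.I * (Complex.exp (Complex.I * s) - Complex.exp (Complex.I * θ) * t) ^ (1 / 2 : ℂ)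

theorem airyBranch_sq (s θ t : ℝ) :
    airyBranch s θ t ^ 2 = Complex.exp (Complex.I * θ) * t - Complex.exp (Complex.I * s) := by
  rw [airyBranch, mul_pow, one_div, Complex.cpow_ofNat_inv_pow, neg_sq, Complex.I_sq, neg_one_mul,
    neg_sub]

theorem airyBranch_zero {s : ℝ} (hs : s ∈ Ioc (-Real.pi) Real.pi) (θ : ℝ) :
    airyBranch s θ 0 = -Complex.I * Complex.exp (Complex.I * (s / 2 : ℝ)) := by
  have hroot := exp_I_mul_cpow_ofReal hs (1 / 2)
  rw [mul_one_div] at hroot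
  rw [airyBranch, Complex.ofReal_zero, mul_zero, sub_zero, ← hroot]
  norm_num

section Segment

variable {s θ : ℝ}

theorem sin_sub_div_sin_nonneg (hs : 0 ≤ s) (hθ : θ ∈ Ico s Real.pi) :
    0 ≤ Real.sin (θ - s) / Real.sin θ :=
  div_nonneg
    (Real.sin_nonneg_of_nonneg_of_le_pi (sub_nonneg.2 hθ.1) (by linarith [hθ.2]))
    (Real.sin_nonneg_of_nonneg_of_le_pi (hs.trans hθ.1) hθ.2.le)

theorem sin_sub_div_sin_rpow_eq_one_iff (hs : 0 < s) (hθ : θ ∈ Ico s Real.pi) {p : ℝ}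
    (hp : p ≠ 0) :
    (Real.sin (θ - s) / Real.sin θ) ^ p = 1 ↔ θ = (Real.pi + s) / 2 := by
  have hsin : Real.sin θ ≠ 0 := (Real.sin_pos_of_pos_of_lt_pi (hs.trans_le hθ.1) hθ.2).ne'
  rw [← Real.one_rpow p, Real.rpow_left_inj (sin_sub_div_sin_nonneg hs.le hθ) zero_le_one hp,
    div_eq_one_iff_eq hsin]
  exact sin_sub_eq_sin_iff ⟨hs, by linarith [hθ.1, hθ.2]⟩
    ⟨by linarith [hθ.1], by linarith [hθ.2]⟩

theorem exp_sub_exp_mul_re_nonneg_or_im_ne_zero (hs : 0 < s) (hθ : θ ∈ Ico s Real.pi) {t : ℝ}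
    (ht : t ≤ Real.sin s / Real.sin θ) :
    0 ≤ (Complex.exp (Complex.I * s) - Complex.exp (Complex.I * θ) * t).re ∨
      (Complex.exp (Complex.I * s) - Complex.exp (Complex.I * θ) * t).im ≠ 0 := by
  have hsin : 0 < Real.sin θ := Real.sin_pos_of_pos_of_lt_pi (hs.trans_le hθ.1) hθ.2
  rcases ht.eq_or_lt with rfl | hlt
  · rw [exp_sub_exp_mul_sin_div_sin hsin.ne', Complex.ofReal_re]
    exact Or.inl (sin_sub_div_sin_nonneg hs.le hθ)
  · rw [im_exp_sub_exp_mul]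
    exact Or.inr (sub_pos.2 ((lt_div_iff₀' hsin).1 hlt)).ne'

theorem continuousOn_airyBranch (hs : 0 < s) (hθ : θ ∈ Ico s Real.pi) :
    ContinuousOn (airyBranch s θ) (Iic (Real.sin s / Real.sin θ)) :=
  continuousOn_const.mul (continuousOn_sub_mul_cpow (by norm_num) fun _ ht ↦
    exp_sub_exp_mul_re_nonneg_or_im_ne_zero hs hθ ht)

theorem integral_airyBranch (hs : 0 < s) (hθ : θ ∈ Ico s Real.pi) :
    ∫ t in (0 : ℝ)..(Real.sin s / Real.sin θ), airyBranch s θ t =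
      2 / 3 * Complex.I *
        (((Real.sin (θ - s) / Real.sin θ) ^ (3 / 2 : ℝ) : ℝ) * Complex.exp ((-θ : ℝ) * Complex.I) -
          Complex.exp ((3 / 2 * s - θ : ℝ) * Complex.I)) := by
  have hsin : 0 < Real.sin θ := Real.sin_pos_of_pos_of_lt_pi (hs.trans_le hθ.1) hθ.2
  have hlength : 0 ≤ Real.sin s / Real.sin θ :=
    div_nonneg (Real.sin_nonneg_of_nonneg_of_le_pi hs.le (hθ.1.trans hθ.2.le)) hsin.le
  have hstart : Complex.exp (Complex.I * s) ^ (3 / 2 : ℂ) =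
      Complex.exp (Complex.I * (s * (3 / 2) : ℝ)) := by
    rw [← exp_I_mul_cpow_ofReal ⟨by linarith [Real.pi_pos], hθ.1.trans hθ.2.le⟩]
    norm_num
  have hend : ((Real.sin (θ - s) / Real.sin θ : ℝ) : ℂ) ^ (3 / 2 : ℂ) =
      ((Real.sin (θ - s) / Real.sin θ) ^ (3 / 2 : ℝ) : ℝ) := by
    rw [Complex.ofReal_cpow (sin_sub_div_sin_nonneg hs.le hθ)]
    norm_num
  have hphase : Complex.exp ((3 / 2 * s - θ : ℝ) * Complex.I) =
      Complex.exp ((-θ : ℝ) * Complex.I) * Complex.exp (Complex.I * (s * (3 / 2) : ℝ)) := by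
    rw [← Complex.exp_add]
    push_cast
    ring_nf
  have hinv : (Complex.exp (Complex.I * θ))⁻¹ = Complex.exp ((-θ : ℝ) * Complex.I) := by
    rw [← Complex.exp_neg, Complex.ofReal_neg, neg_mul, mul_comm]
  simp only [airyBranch]
  rw [intervalIntegral.integral_const_mul,
    integral_sub_mul_cpow (Complex.exp_ne_zero _) (by norm_num) fun t ht ↦
      exp_sub_exp_mul_re_nonneg_or_im_ne_zero hs hθ (uIcc_of_le hlength ▸ ht).2,
    show (1 / 2 + 1 : ℂ) = 3 / 2 by norm_num, Complex.ofReal_zero, mul_zero, sub_zero,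
    exp_sub_exp_mul_sin_div_sin hsin.ne', hstart, hend, hphase, ← hinv]
  ring

theorem re_integral_airyBranch (hs : 0 < s) (hθ : θ ∈ Ico s Real.pi) :
    (∫ t in (0 : ℝ)..(Real.sin s / Real.sin θ), airyBranch s θ t).re =
      2 / 3 * (Real.sin (3 / 2 * s - θ) +
        (Real.sin (θ - s) / Real.sin θ) ^ (3 / 2 : ℝ) * Real.sin θ) := by
  rw [integral_airyBranch hs hθ, show (2 / 3 : ℂ) = (2 / 3 : ℝ) by norm_num, mul_assoc,
    Complex.re_ofReal_mul, Complex.I_mul_re, Complex.sub_im, Complex.im_ofReal_mul,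
    Complex.exp_ofReal_mul_I_im, Complex.exp_ofReal_mul_I_im, Real.sin_neg]
  ring

end Segment

theorem t0_one : t0 1 = 2 * Real.pi / 3 := by
  norm_num [t0]

theorem t0_one_mem_Ioo : t0 1 ∈ Ioo 0 Real.pi := by
  rw [t0_one]
  constructor <;> linarith [Real.pi_pos]

theorem Z0_one (θ : ℝ) : Z0 1 θ = Real.sin (t0 1) / Real.sin θ := by
  rw [Z0, one_div_one, Real.rpow_one]

theorem re_integral_airyBranch_t0_one_sub {θ : ℝ} (hθ : θ ∈ Ico (t0 1) Real.pi) :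
    (∫ t in (0 : ℝ)..(Z0 1 θ), airyBranch (t0 1) θ t).re -
        2 * Real.sin θ * ∫ ξ in (0 : ℝ)..1, √(1 - ξ) =
      2 / 3 * ((Real.sin (θ - t0 1) / Real.sin θ) ^ (3 / 2 : ℝ) - 1) * Real.sin θ := by
  have hreflect : Real.sin (3 / 2 * t0 1 - θ) = Real.sin θ := by
    rw [t0_one, show 3 / 2 * (2 * Real.pi / 3) - θ = Real.pi - θ by ring, Real.sin_pi_sub]
  rw [Z0_one, re_integral_airyBranch t0_one_mem_Ioo.1 hθ, integral_sqrt_one_sub, hreflect]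
  ring

/-- for `α = 1` (complex Airy operator), for every `θ ∈ [2π/3, π)` one has
`ρ_1(θ) = (2/3)·((sin(θ − 2π/3)/sin θ)^{3/2} − 1)·sin θ`, and the unique zero of `ρ_1` in
`(2π/3, π)` is `θ = 5π/6`. -/
theorem stmt19 (ρ : ℝ → ℝ)
    (hρ : ∀ θ ∈ Set.Ico (t0 1) (min Real.pi (Real.pi * 1)), ∀ g : ℝ → ℂ,
      ContinuousOn g (Set.Icc 0 (Z0 1 θ)) →
      (∀ t ∈ Set.Icc (0 : ℝ) (Z0 1 θ),
        g t ^ 2 = Complex.exp (Complex.I * (θ : ℂ)) * ((t ^ (1 : ℝ) : ℝ) : ℂ)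
          - Complex.exp (Complex.I * ((t0 1 : ℝ) : ℂ))) →
      g 0 = -Complex.I * Complex.exp (Complex.I * ((t0 1 / 2 : ℝ) : ℂ)) →
      ρ θ = (∫ t in (0 : ℝ)..(Z0 1 θ), g t).re
        - 2 * Real.sin (θ / 1) * ∫ ξ in (0 : ℝ)..1, Real.sqrt (1 - ξ ^ (1 : ℝ))) :
    (∀ θ ∈ Set.Ico (2 * Real.pi / 3) Real.pi,
      ρ θ = 2 / 3 *
        ((Real.sin (θ - 2 * Real.pi / 3) / Real.sin θ) ^ ((3 : ℝ) / 2) - 1) * Real.sin θ) ∧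
    ρ (5 * Real.pi / 6) = 0 ∧
    (∀ θ ∈ Set.Ioo (2 * Real.pi / 3) Real.pi, ρ θ = 0 → θ = 5 * Real.pi / 6) := by
  have hpi := Real.pi_pos
  have hformula : ∀ θ ∈ Ico (2 * Real.pi / 3) Real.pi, ρ θ = 2 / 3 *
      ((Real.sin (θ - 2 * Real.pi / 3) / Real.sin θ) ^ ((3 : ℝ) / 2) - 1) * Real.sin θ := by
    rw [← t0_one]
    intro θ hθ
    rw [hρ θ (by rwa [mul_one, min_self]) (airyBranch (t0 1) θ)
      (Z0_one θ ▸ (continuousOn_airyBranch t0_one_mem_Ioo.1 hθ).mono Icc_subset_Iic_self)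
      (fun t _ ↦ by rw [airyBranch_sq, Real.rpow_one])
      (airyBranch_zero ⟨by linarith [t0_one_mem_Ioo.1], t0_one_mem_Ioo.2.le⟩ θ)]
    simpa only [Real.rpow_one, div_one] using re_integral_airyBranch_t0_one_sub hθ
  have hzero : ∀ θ ∈ Ico (2 * Real.pi / 3) Real.pi, ρ θ = 0 ↔ θ = 5 * Real.pi / 6 := by
    intro θ hθ
    have hsin : Real.sin θ ≠ 0 :=
      (Real.sin_pos_of_pos_of_lt_pi (by linarith [hθ.1]) hθ.2).ne'
    rw [hformula θ hθ, mul_eq_zero_iff_right hsin, mul_eq_zero_iff_left (by norm_num), sub_eq_zero,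
      sin_sub_div_sin_rpow_eq_one_iff (by positivity) hθ (by norm_num),
      show (Real.pi + 2 * Real.pi / 3) / 2 = 5 * Real.pi / 6 by ring]
  exact ⟨hformula, (hzero _ ⟨by linarith, by linarith⟩).2 rfl,
    fun θ hθ ↦ (hzero θ (Ioo_subset_Ico_self hθ)).1⟩
end
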